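/- arXiv:1902.09128 — 3 statements merged into one kernel-verified Lean document; each statement's English description precedes it below -/
import Mathlib

section
/- Let v, ξ̂ ∈ ℝⁿ, t ∈ ℝ and λ ∈ ℝ. Then the extended-real supremum over ξ ∈ ℝⁿ of ⟨ξ,v⟩ − t − λ‖ξ − ξ̂‖_p equals ⟨ξ̂,v⟩ − t if ‖v‖_q ≤ λ, and equals +∞ if ‖v‖_q > λ. -/
open MeasureTheory Filter Topology
open scoped ENNReal BigOperators

/-- The ℓp norm on ℝⁿ, for `p ∈ [1,∞]` (an extended nonnegative real). -/
noncomputable def lpNorm {n : ℕ} (p : ℝ≥0∞) (x : Fin n → ℝ) : ℝ :=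
  if p = ∞ then ⨆ i, |x i| else (∑ i, |x i| ^ p.toReal) ^ (1 / p.toReal)

/-- The Euclidean inner product on ℝⁿ. -/
def ip {n : ℕ} (w x : Fin n → ℝ) : ℝ := ∑ i, w i * x i

/-!
In any nontrivial real normed space, a continuous functional `f` satisfies
`f x - c * ‖x - x₀‖ ≤ f x₀` for all `x` when `‖f‖ ≤ c`, with equality at `x₀`. When `c < ‖f‖` some
direction `u` has `c * ‖u‖ < f u`, and along the ray `x₀ + s • u` the left-hand side grows linearly.
It remains to identify the norm of `x ↦ x ⬝ᵥ v` on ℓp with the ℓq norm of `v`: Hölder's inequality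
bounds it above, and an explicit vector attains the bound.
-/

section NormedSpace

variable {E : Type*} [NormedAddCommGroup E] [NormedSpace ℝ E]

lemma exists_mul_norm_lt_apply [Nontrivial E] (f : StrongDual ℝ E) {c : ℝ} (hc : c < ‖f‖) :
    ∃ u, c * ‖u‖ < f u := by
  obtain ⟨u, hu⟩ : ∃ u, c * ‖u‖ < |f u| := by
    rcases le_or_gt 0 c with hc₀ | hc₀
    · exact f.exists_mul_lt_of_lt_opNorm hc₀ hc
    · obtain ⟨u, hu⟩ := exists_ne (0 : E)
      exact ⟨u, (mul_neg_of_neg_of_pos hc₀ (norm_pos_iff.2 hu)).trans_le (abs_nonneg _)⟩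
  rcases lt_abs.1 hu with h | h
  · exact ⟨u, h⟩
  · exact ⟨-u, by rwa [norm_neg, map_neg]⟩

lemma iSup_apply_sub_mul_norm_sub_of_norm_le {f : StrongDual ℝ E} {c : ℝ} (hc : ‖f‖ ≤ c)
    (x₀ : E) (t : ℝ) :
    (⨆ x, ((f x - t - c * ‖x - x₀‖ : ℝ) : EReal)) = ((f x₀ - t : ℝ) : EReal) := by
  refine le_antisymm (iSup_le fun x ↦ EReal.coe_le_coe ?_) (le_iSup_of_le x₀ (by simp))
  have hf : f x - f x₀ ≤ c * ‖x - x₀‖ := calc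
    f x - f x₀ = f (x - x₀) := (map_sub f x x₀).symm
    _ ≤ ‖f (x - x₀)‖ := Real.le_norm_self _
    _ ≤ c * ‖x - x₀‖ := f.le_of_opNorm_le hc _
  linarith

lemma iSup_apply_sub_mul_norm_sub_of_lt_norm [Nontrivial E] {f : StrongDual ℝ E} {c : ℝ}
    (hc : c < ‖f‖) (x₀ : E) (t : ℝ) :
    (⨆ x, ((f x - t - c * ‖x - x₀‖ : ℝ) : EReal)) = ⊤ := by
  obtain ⟨u, hu⟩ := exists_mul_norm_lt_apply f hc
  have h_ray : ∀ s : ℝ, 0 ≤ s → f (x₀ + s • u) - t - c * ‖x₀ + s • u - x₀‖ =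
      f x₀ - t + s * (f u - c * ‖u‖) := fun s hs ↦ by
    rw [add_sub_cancel_left, norm_smul_of_nonneg hs, map_add, map_smul, smul_eq_mul]
    ring
  have h_lim : Tendsto (fun s : ℝ ↦ f x₀ - t + s * (f u - c * ‖u‖)) atTop atTop :=
    tendsto_atTop_add_const_left _ _ (tendsto_id.atTop_mul_const (sub_pos.2 hu))
  refine top_le_iff.1 (le_of_tendsto (EReal.tendsto_coe_nhds_top_iff.2 h_lim) ?_)
  filter_upwards [eventually_ge_atTop 0] with s hs
  exact le_iSup_of_le (x₀ + s • u) (by rw [h_ray s hs])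

end NormedSpace

section Duality

variable {ι 𝕜 : Type*} [Fintype ι] [RCLike 𝕜]

lemma norm_dotProduct_le (p q : ℝ≥0∞) [p.HolderConjugate q] (x y : ι → 𝕜) :
    ‖x ⬝ᵥ y‖ ≤ ‖WithLp.toLp p x‖ * ‖WithLp.toLp q y‖ := by
  have : Fact (1 ≤ p) := ⟨ENNReal.HolderConjugate.one_le p q⟩
  have : Fact (1 ≤ q) := ⟨ENNReal.HolderConjugate.one_le q p⟩
  let B (_ : ι) : 𝕜 →L[𝕜] 𝕜 →L[𝕜] 𝕜 := ContinuousLinearMap.mul 𝕜 𝕜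
  have hB : ∀ i, ‖B i‖ ≤ (1 : NNReal) := fun _ ↦ by simp [B]
  let x' := (lpPiLpₗᵢ (fun _ : ι ↦ 𝕜) 𝕜).symm (WithLp.toLp p x)
  let y' := (lpPiLpₗᵢ (fun _ : ι ↦ 𝕜) 𝕜).symm (WithLp.toLp q y)
  calc ‖x ⬝ᵥ y‖ = ‖lp.dualPairing p q B hB x' y'‖ := by
        rw [lp.dualPairing_apply, tsum_fintype]; rfl
    _ ≤ 1 * ‖x'‖ * ‖y'‖ :=
        ContinuousLinearMap.le_of_opNorm₂_le_of_le _ (lp.norm_dualPairing B hB) le_rfl le_rfl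
    _ = ‖WithLp.toLp p x‖ * ‖WithLp.toLp q y‖ := by
        simp only [x', y', one_mul, LinearIsometryEquiv.norm_map]

lemma exists_norm_toLp_top_le_one_dotProduct_eq (v : ι → 𝕜) :
    ∃ u : ι → 𝕜, ‖WithLp.toLp ∞ u‖ ≤ 1 ∧ u ⬝ᵥ v = ‖WithLp.toLp 1 v‖ := by
  choose u hu huv using fun i ↦ RCLike.exists_norm_eq_mul_self (v i)
  refine ⟨u, ?_, ?_⟩
  · rw [PiLp.norm_toLp, pi_norm_le_iff_of_nonneg zero_le_one]
    exact fun i ↦ (hu i).le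
  · simp only [dotProduct, PiLp.norm_eq_of_L1, RCLike.ofReal_sum, huv]

lemma exists_norm_toLp_one_le_one_dotProduct_eq (v : ι → 𝕜) :
    ∃ u : ι → 𝕜, ‖WithLp.toLp 1 u‖ ≤ 1 ∧ u ⬝ᵥ v = ‖WithLp.toLp ∞ v‖ := by
  classical
  rcases isEmpty_or_nonempty ι with _ | _
  · exact ⟨0, by simp, by simp [Subsingleton.elim v 0]⟩
  · obtain ⟨i, hi⟩ := exists_eq_ciSup_of_finite (f := fun i ↦ ‖v i‖)
    obtain ⟨c, hc, hcv⟩ := RCLike.exists_norm_eq_mul_self (v i)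
    refine ⟨Pi.single i c, ?_, ?_⟩
    · rw [PiLp.toLp_single, PiLp.norm_single, hc]
    · rw [single_dotProduct, ← hcv, PiLp.norm_eq_ciSup, ← hi]

lemma exists_norm_toLp_le_one_dotProduct_eq_of_ne_top {p q : ℝ≥0∞} [p.HolderConjugate q]
    (hp : p ≠ ∞) (hq : q ≠ ∞) (v : ι → 𝕜) :
    ∃ u : ι → 𝕜, ‖WithLp.toLp p u‖ ≤ 1 ∧ u ⬝ᵥ v = ‖WithLp.toLp q v‖ := by
  have hpq := ENNReal.HolderConjugate.toReal_of_ne_top hp hq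
  obtain ⟨w, (hw : ∑ i, w i ^ p.toReal ≤ 1), hwv⟩ :=
    (NNReal.isGreatest_Lp Finset.univ (fun i ↦ ‖v i‖₊) hpq.symm).1
  choose c hc hcv using fun i ↦ RCLike.exists_norm_eq_mul_self (v i)
  refine ⟨fun i ↦ ((w i : ℝ) : 𝕜) * c i, ?_, ?_⟩
  · rw [PiLp.norm_eq_sum hpq.pos]
    refine Real.rpow_le_one (by positivity) ?_ hpq.one_div_nonneg
    simpa [hc] using NNReal.coe_le_coe.2 hw
  · have hwv' : ∑ i, ‖v i‖ * w i = ‖WithLp.toLp q v‖ := by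
      rw [PiLp.norm_eq_sum hpq.symm.pos]
      simpa using congrArg NNReal.toReal hwv
    rw [← hwv', dotProduct, RCLike.ofReal_sum]
    refine Finset.sum_congr rfl fun i _ ↦ ?_
    rw [RCLike.ofReal_mul, hcv]
    ring

lemma exists_norm_toLp_le_one_dotProduct_eq (p q : ℝ≥0∞) [p.HolderConjugate q] (v : ι → 𝕜) :
    ∃ u : ι → 𝕜, ‖WithLp.toLp p u‖ ≤ 1 ∧ u ⬝ᵥ v = ‖WithLp.toLp q v‖ := by
  rcases eq_or_ne p ∞ with rfl | hp
  · obtain rfl := (ENNReal.HolderConjugate.eq_top_iff_eq_one ∞ q).1 rfl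
    exact exists_norm_toLp_top_le_one_dotProduct_eq v
  rcases eq_or_ne q ∞ with rfl | hq
  · obtain rfl := (ENNReal.HolderConjugate.eq_top_iff_eq_one ∞ p).1 rfl
    exact exists_norm_toLp_one_le_one_dotProduct_eq v
  exact exists_norm_toLp_le_one_dotProduct_eq_of_ne_top hp hq v

/-- The functional `x ↦ x ⬝ᵥ v` on ℓp, whose norm is the norm of `v` in the
conjugate ℓq. There is no complex conjugation, so that it is linear in `v` as well. -/
noncomputable def dotProductDual (p : ℝ≥0∞) [Fact (1 ≤ p)] (v : ι → 𝕜) :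
    StrongDual 𝕜 (PiLp p fun _ : ι ↦ 𝕜) :=
  ∑ i, v i • PiLp.proj p (fun _ ↦ 𝕜) i

lemma dotProductDual_toLp (p : ℝ≥0∞) [Fact (1 ≤ p)] (v x : ι → 𝕜) :
    dotProductDual p v (WithLp.toLp p x) = x ⬝ᵥ v := by
  simp [dotProductDual, dotProduct, mul_comm]

lemma norm_dotProductDual (p q : ℝ≥0∞) [Fact (1 ≤ p)] [p.HolderConjugate q] (v : ι → 𝕜) :
    ‖dotProductDual p v‖ = ‖WithLp.toLp q v‖ := by
  have : Fact (1 ≤ q) := ⟨ENNReal.HolderConjugate.one_le q p⟩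
  apply le_antisymm
  · refine ContinuousLinearMap.opNorm_le_bound _ (norm_nonneg _) fun x ↦ ?_
    rw [← WithLp.toLp_ofLp p x, dotProductDual_toLp, mul_comm]
    exact norm_dotProduct_le p q _ v
  · obtain ⟨u, hu, huv⟩ := exists_norm_toLp_le_one_dotProduct_eq p q v
    calc ‖WithLp.toLp q v‖ = ‖dotProductDual p v (WithLp.toLp p u)‖ := by
          rw [dotProductDual_toLp, huv, RCLike.norm_ofReal, abs_norm]
      _ ≤ ‖dotProductDual p v‖ := ContinuousLinearMap.unit_le_opNorm _ _ hu

end Duality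

lemma lpNorm_eq_norm_toLp {n : ℕ} {p : ℝ≥0∞} (hp : p ≠ 0) (x : Fin n → ℝ) :
    _root_.lpNorm p x = ‖WithLp.toLp p x‖ :=
  (if_neg hp).symm

theorem stmt3_general {ι : Type*} [Fintype ι] [Nonempty ι] (p q : ℝ≥0∞) [p.HolderConjugate q]
    (v x₀ : ι → ℝ) (t c : ℝ) :
    (⨆ x : ι → ℝ, ((x ⬝ᵥ v - t - c * ‖WithLp.toLp p (x - x₀)‖ : ℝ) : EReal)) =
      if ‖WithLp.toLp q v‖ ≤ c then ((x₀ ⬝ᵥ v - t : ℝ) : EReal) else ⊤ := by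
  have : Fact (1 ≤ p) := ⟨ENNReal.HolderConjugate.one_le p q⟩
  simp only [← norm_dotProductDual p q v, ← dotProductDual_toLp p v, WithLp.toLp_sub]
  rw [(WithLp.toLp_surjective p).iSup_comp
    (fun x ↦ ((dotProductDual p v x - t - c * ‖x - WithLp.toLp p x₀‖ : ℝ) : EReal))]
  split_ifs with hc
  · exact iSup_apply_sub_mul_norm_sub_of_norm_le hc _ t
  · exact iSup_apply_sub_mul_norm_sub_of_lt_norm (not_le.1 hc) _ t

open scoped Classical in
/-- `sup_{ξ∈ℝⁿ} (⟨ξ,v⟩ − t − λ‖ξ − ξ̂‖_p)` equals `⟨ξ̂,v⟩ − t` if `‖v‖_q ≤ λ`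
and `+∞` otherwise. -/
theorem stmt3 (n : ℕ) (hn : 1 ≤ n) (p q : ℝ≥0∞) (hp : 1 ≤ p) (hpq : 1 / p + 1 / q = 1)
    (v ξhat : Fin n → ℝ) (t lam : ℝ) :
    (⨆ ξ : Fin n → ℝ, ((ip ξ v - t - lam * lpNorm p (ξ - ξhat) : ℝ) : EReal)) =
      if lpNorm q v ≤ lam then ((ip ξhat v - t : ℝ) : EReal) else ⊤ := by
  have : NeZero n := ⟨Nat.one_le_iff_ne_zero.1 hn⟩
  have : p.HolderConjugate q := ⟨by simpa using hpq⟩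
  simp only [lpNorm_eq_norm_toLp (ENNReal.HolderConjugate.ne_zero p q),
    lpNorm_eq_norm_toLp (ENNReal.HolderConjugate.ne_zero q p)]
  exact stmt3_general p q v ξhat t lam
end

section
/- Let v ∈ ℝⁿ, t ∈ ℝ, ε ≥ 0 and let ξ̂¹,…,ξ̂ᴺ ∈ ℝⁿ (N ≥ 1) with empirical distribution F_N. Let μ be a Borel probability measure on ℝⁿ with finite first moment, and suppose there exists a coupling K of F_N and μ (a Borel probability measure on ℝⁿ × ℝⁿ whose first marginal is F_N and second marginal is μ) with ∫ ‖x − y‖_p dK(x,y) ≤ ε. Then ∫ h(v,t,ξ) dμ(ξ) ≤ (1/N)·Σ_{i=1}^N h(v,t,ξ̂ⁱ) + ε·‖v‖_q. -/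
open MeasureTheory Filter Topology
open scoped ENNReal BigOperators

/-- `h(v,t,ξ) = max(⟨ξ,v⟩ − t, 0)`. -/
noncomputable def hfun {n : ℕ} (v : Fin n → ℝ) (t : ℝ) (ξ : Fin n → ℝ) : ℝ :=
  max (ip ξ v - t) 0

/-- The empirical distribution `(1/N)·Σᵢ δ_{ξⁱ}` of `N` samples. -/
noncomputable def empirical {n : ℕ} (N : ℕ) (ξ : Fin N → Fin n → ℝ) :
    MeasureTheory.Measure (Fin n → ℝ) :=
  (N : ℝ≥0∞)⁻¹ • ∑ i, MeasureTheory.Measure.dirac (ξ i)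

/-- The Wasserstein distance (valued in `ℝ≥0∞`) between two Borel probability measures
on ℝⁿ, with ground metric `‖·‖_p`: the infimum over couplings `K` (probability measures on
ℝⁿ × ℝⁿ with the prescribed marginals) of `∫ ‖x − y‖_p dK(x,y)`. -/
noncomputable def dW {n : ℕ} (p : ℝ≥0∞) (μ ν : MeasureTheory.Measure (Fin n → ℝ)) : ℝ≥0∞ :=
  ⨅ (K : MeasureTheory.Measure ((Fin n → ℝ) × (Fin n → ℝ)))
    (_ : MeasureTheory.IsProbabilityMeasure K)
    (_ : K.map Prod.fst = μ) (_ : K.map Prod.snd = ν),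
    ∫⁻ z, ENNReal.ofReal (lpNorm p (z.1 - z.2)) ∂K

/-!
By Hölder's inequality, `h(v,t,·)` is `‖v‖_q`-Lipschitz for `‖·‖_p`. Integrating
`h(v,t,y) ≤ h(v,t,x) + ‖x − y‖_p ‖v‖_q` against a coupling gives the bound: this is the easy half
of Kantorovich duality.
-/

section LpNorm

variable {n : ℕ} {p : ℝ≥0∞}

theorem lpNorm_top (x : Fin n → ℝ) : lpNorm ∞ x = ⨆ i, |x i| :=
  if_pos rfl

theorem lpNorm_eq_sum (hp : p ≠ ∞) (x : Fin n → ℝ) :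
    lpNorm p x = (∑ i, |x i| ^ p.toReal) ^ (1 / p.toReal) :=
  if_neg hp

theorem lpNorm_one (x : Fin n → ℝ) : lpNorm 1 x = ∑ i, |x i| := by
  simp [lpNorm_eq_sum ENNReal.one_ne_top]

theorem lpNorm_nonneg (p : ℝ≥0∞) (x : Fin n → ℝ) : 0 ≤ lpNorm p x := by
  unfold _root_.lpNorm
  split_ifs
  · exact Real.iSup_nonneg fun i => abs_nonneg _
  · positivity

theorem lpNorm_sub_comm (p : ℝ≥0∞) (x y : Fin n → ℝ) : lpNorm p (x - y) = lpNorm p (y - x) := by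
  simp only [_root_.lpNorm, Pi.sub_apply, abs_sub_comm]

theorem abs_le_lpNorm_top (x : Fin n → ℝ) (i : Fin n) : |x i| ≤ lpNorm ∞ x := by
  rw [lpNorm_top]
  exact le_ciSup (Set.finite_range fun i => |x i|).bddAbove i

end LpNorm

section InnerProduct

variable {n : ℕ}

theorem ip_comm (x v : Fin n → ℝ) : ip x v = ip v x :=
  dotProduct_comm x v

theorem ip_sub_left (x y v : Fin n → ℝ) : ip (x - y) v = ip x v - ip y v :=
  sub_dotProduct x y v

theorem ip_le_lpNorm_top_mul_lpNorm_one (x v : Fin n → ℝ) :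
    ip x v ≤ lpNorm ∞ x * lpNorm 1 v :=
  calc ∑ i, x i * v i
      ≤ ∑ i, lpNorm ∞ x * |v i| := Finset.sum_le_sum fun i _ =>
        (le_abs_self _).trans <| (abs_mul _ _).trans_le <|
          mul_le_mul_of_nonneg_right (abs_le_lpNorm_top x i) (abs_nonneg _)
    _ = lpNorm ∞ x * lpNorm 1 v := by rw [lpNorm_one, Finset.mul_sum]

theorem ip_le_lpNorm_mul_lpNorm (p q : ℝ≥0∞) [p.HolderConjugate q] (x v : Fin n → ℝ) :
    ip x v ≤ lpNorm p x * lpNorm q v := by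
  rcases eq_or_ne p ∞ with rfl | hp
  · obtain rfl : q = 1 := (ENNReal.HolderConjugate.eq_top_iff_eq_one ∞ q).1 rfl
    exact ip_le_lpNorm_top_mul_lpNorm_one x v
  rcases eq_or_ne q ∞ with rfl | hq
  · obtain rfl : p = 1 := (ENNReal.HolderConjugate.eq_top_iff_eq_one ∞ p).1 rfl
    rw [ip_comm, mul_comm]
    exact ip_le_lpNorm_top_mul_lpNorm_one v x
  · rw [lpNorm_eq_sum hp, lpNorm_eq_sum hq]
    exact Real.inner_le_Lp_mul_Lq Finset.univ x v
      (ENNReal.HolderConjugate.toReal_of_ne_top hp hq)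

end InnerProduct

section Hinge

variable {n : ℕ} (v : Fin n → ℝ) (t : ℝ)

theorem hfun_nonneg (x : Fin n → ℝ) : 0 ≤ hfun v t x :=
  le_max_right _ _

theorem measurable_hfun : Measurable (hfun v t) := by
  unfold hfun ip
  fun_prop

theorem hfun_le_hfun_add_lpNorm_mul_lpNorm (p q : ℝ≥0∞) [p.HolderConjugate q] (x y : Fin n → ℝ) :
    hfun v t y ≤ hfun v t x + lpNorm p (x - y) * lpNorm q v := by
  have ip_le : ip y v ≤ ip x v + lpNorm p (x - y) * lpNorm q v := by
    rw [← sub_le_iff_le_add', ← ip_sub_left, lpNorm_sub_comm]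
    exact ip_le_lpNorm_mul_lpNorm p q (y - x) v
  have error_nonneg : 0 ≤ lpNorm p (x - y) * lpNorm q v :=
    mul_nonneg (lpNorm_nonneg _ _) (lpNorm_nonneg _ _)
  calc max (ip y v - t) 0
      ≤ max (ip x v - t + lpNorm p (x - y) * lpNorm q v)
          (0 + lpNorm p (x - y) * lpNorm q v) := max_le_max (by linarith) (by linarith)
    _ = hfun v t x + lpNorm p (x - y) * lpNorm q v := max_add_add_right _ _ _

end Hinge

section Empirical

variable {n N : ℕ} {E : Type*} [NormedAddCommGroup E]

theorem integrable_empirical (ξ : Fin N → Fin n → ℝ) (f : (Fin n → ℝ) → E) :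
    Integrable f (empirical N ξ) := by
  rcases eq_or_ne N 0 with rfl | hN
  · simp [empirical]
  · have integrable_sum : Integrable f (∑ i, Measure.dirac (ξ i)) :=
      integrable_finsetSum_measure.2 fun i _ => integrable_dirac enorm_lt_top
    exact integrable_sum.smul_measure (by simpa using hN)

theorem integral_empirical [NormedSpace ℝ E] [CompleteSpace E] (ξ : Fin N → Fin n → ℝ)
    (f : (Fin n → ℝ) → E) : ∫ x, f x ∂empirical N ξ = (1 / (N : ℝ)) • ∑ i, f (ξ i) := by
  rw [empirical, integral_smul_measure,
    integral_finsetSum_measure fun i _ => integrable_dirac enorm_lt_top]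
  simp

end Empirical

section Coupling

variable {α β : Type*} [MeasurableSpace α] [MeasurableSpace β] {K : Measure (α × β)}
  {c : α × β → ℝ≥0∞}

theorem lintegral_snd_le_lintegral_fst_add_lintegral {f : α → ℝ≥0∞} {g : β → ℝ≥0∞}
    (hf : AEMeasurable f K.fst) (hfg : ∀ x y, g y ≤ f x + c (x, y)) :
    ∫⁻ y, g y ∂K.snd ≤ ∫⁻ x, f x ∂K.fst + ∫⁻ z, c z ∂K :=
  calc ∫⁻ y, g y ∂K.snd
      ≤ ∫⁻ z, g z.2 ∂K := lintegral_map_le g Prod.snd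
    _ ≤ ∫⁻ z, (f z.1 + c z) ∂K := lintegral_mono fun z => hfg z.1 z.2
    _ = ∫⁻ z, f z.1 ∂K + ∫⁻ z, c z ∂K :=
        lintegral_add_left' (hf.comp_measurable measurable_fst) c
    _ = ∫⁻ x, f x ∂K.fst + ∫⁻ z, c z ∂K := by
        rw [Measure.fst, lintegral_map' hf measurable_fst.aemeasurable]

theorem integral_snd_le_integral_fst_add {f : α → ℝ} {g : β → ℝ} {C : ℝ}
    (hf : Integrable f K.fst) (hf_nonneg : 0 ≤ f)
    (hg : AEStronglyMeasurable g K.snd) (hg_nonneg : 0 ≤ g)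
    (hfg : ∀ x y, ENNReal.ofReal (g y) ≤ ENNReal.ofReal (f x) + c (x, y))
    (hC : 0 ≤ C) (hcC : ∫⁻ z, c z ∂K ≤ ENNReal.ofReal C) :
    ∫ y, g y ∂K.snd ≤ ∫ x, f x ∂K.fst + C := by
  have integral_f_nonneg : 0 ≤ ∫ x, f x ∂K.fst := integral_nonneg hf_nonneg
  rw [integral_eq_lintegral_of_nonneg_ae (ae_of_all _ hg_nonneg) hg]
  refine ENNReal.toReal_le_of_le_ofReal (by positivity) ?_
  calc ∫⁻ y, ENNReal.ofReal (g y) ∂K.snd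
      ≤ ∫⁻ x, ENNReal.ofReal (f x) ∂K.fst + ∫⁻ z, c z ∂K :=
        lintegral_snd_le_lintegral_fst_add_lintegral hf.aemeasurable.ennreal_ofReal hfg
    _ ≤ ENNReal.ofReal (∫ x, f x ∂K.fst) + ENNReal.ofReal C := by
        rw [ofReal_integral_eq_lintegral_ofReal hf (ae_of_all _ hf_nonneg)]
        gcongr
    _ = ENNReal.ofReal (∫ x, f x ∂K.fst + C) := (ENNReal.ofReal_add integral_f_nonneg hC).symm

end Coupling

theorem stmt5_general {n : ℕ} {p q : ℝ≥0∞} (hpq : 1 / p + 1 / q = 1)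
    (v : Fin n → ℝ) (t : ℝ) {ε : ℝ} (hε : 0 ≤ ε) {ν μ : Measure (Fin n → ℝ)}
    (hν : Integrable (hfun v t) ν) {K : Measure ((Fin n → ℝ) × (Fin n → ℝ))}
    (hK1 : K.map Prod.fst = ν) (hK2 : K.map Prod.snd = μ)
    (hKcost : ∫⁻ z, ENNReal.ofReal (lpNorm p (z.1 - z.2)) ∂K ≤ ENNReal.ofReal ε) :
    ∫ x, hfun v t x ∂μ ≤ ∫ x, hfun v t x ∂ν + ε * lpNorm q v := by
  subst hK1 hK2
  have : p.HolderConjugate q := ENNReal.holderConjugate_iff.2 (by simpa only [one_div] using hpq)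
  refine integral_snd_le_integral_fst_add
    (c := fun z => ENNReal.ofReal (lpNorm p (z.1 - z.2)) * ENNReal.ofReal (lpNorm q v))
    hν (hfun_nonneg v t) (measurable_hfun v t).aestronglyMeasurable (hfun_nonneg v t)
    (fun x y => ?_) (mul_nonneg hε (lpNorm_nonneg q v)) ?_
  · rw [← ENNReal.ofReal_mul (lpNorm_nonneg _ _), ← ENNReal.ofReal_add (hfun_nonneg v t x)
      (mul_nonneg (lpNorm_nonneg _ _) (lpNorm_nonneg _ _))]
    exact ENNReal.ofReal_le_ofReal (hfun_le_hfun_add_lpNorm_mul_lpNorm v t p q x y)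
  · rw [lintegral_mul_const' _ _ ENNReal.ofReal_ne_top, ENNReal.ofReal_mul hε]
    gcongr

/-- if `μ` is a probability measure with finite first moment admitting a coupling
`K` with the empirical distribution `F_N` of transport cost at most `ε`, then
`∫ h(v,t,ξ) dμ ≤ (1/N)Σ h(v,t,ξ̂ⁱ) + ε‖v‖_q`. -/
theorem stmt5 (n : ℕ) (hn : 1 ≤ n) (p q : ℝ≥0∞) (hp : 1 ≤ p) (hpq : 1 / p + 1 / q = 1)
    (v : Fin n → ℝ) (t ε : ℝ) (hε : 0 ≤ ε)
    (N : ℕ) (hN : 1 ≤ N) (ξ : Fin N → Fin n → ℝ)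
    (μ : Measure (Fin n → ℝ)) (hμ : IsProbabilityMeasure μ)
    (hmom : Integrable (fun x => lpNorm p x) μ)
    (K : Measure ((Fin n → ℝ) × (Fin n → ℝ))) (hK : IsProbabilityMeasure K)
    (hK1 : K.map Prod.fst = empirical N ξ) (hK2 : K.map Prod.snd = μ)
    (hKcost : ∫⁻ z, ENNReal.ofReal (lpNorm p (z.1 - z.2)) ∂K ≤ ENNReal.ofReal ε) :
    ∫ x, hfun v t x ∂μ ≤ (1 / (N : ℝ)) * ∑ i, hfun v t (ξ i) + ε * lpNorm q v := by
  rw [← smul_eq_mul (1 / (N : ℝ)), ← integral_empirical]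
  exact stmt5_general hpq v t hε (integrable_empirical ξ _) hK1 hK2 hKcost
end

section
/- (Corollary 2, pointwise worst-case linear cost) Let x ∈ ℝⁿ with x_i ≥ 0 for all i, let ε ≥ 0, and let ĉ¹,…,ĉᴺ ∈ ℝⁿ (N ≥ 1) with empirical distribution F_N = (1/N)·Σ_{k=1}^N δ_{ĉᵏ}. Then the supremum of ∫ ⟨c,x⟩ dμ(c) over all Borel probability measures μ on ℝⁿ with finite first moment satisfying d_W^∞(F_N, μ) ≤ ε, where d_W^∞ is the Wasserstein distance with ground metric ‖·‖_∞, equals (1/N)·Σ_{k=1}^N ⟨ĉᵏ,x⟩ + ε·Σ_{i=1}^n x_i = Σ_{i=1}^n ( (1/N)·Σ_{k=1}^N ĉᵏ_i + ε )·x_i. -/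
open MeasureTheory Filter Topology
open scoped ENNReal BigOperators

/-!
Along any coupling of `P` and `μ`, the means of an `L`-Lipschitz function differ by at most `L`
times the transport cost (the easy half of Kantorovich duality), so a linear functional `ℓ` gains
at most `ε * ‖ℓ‖` on the Wasserstein ball of radius `ε`. The bound is attained by translating `P`
by `ε • v`, where `‖v‖ ≤ 1` and `ℓ v = ‖ℓ‖`. For the `ℓ∞` norm and `ℓ = ⟨·, x⟩` one has
`‖ℓ‖ = ‖x‖₁` and `v` is the vector of signs of `x`.
-/

open scoped NNReal

section Wasserstein

variable {X : Type*} [MeasurableSpace X]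

/-- The couplings of `μ` and `ν`: probability measures on `X × X` with marginals `μ` and `ν`, the
transport plans over which the Wasserstein distance is minimized. -/
def couplings (μ ν : Measure X) : Set (Measure (X × X)) :=
  {K | IsProbabilityMeasure K ∧ K.map Prod.fst = μ ∧ K.map Prod.snd = ν}

lemma prod_mem_couplings (μ ν : Measure X) [IsProbabilityMeasure μ] [IsProbabilityMeasure ν] :
    μ.prod ν ∈ couplings μ ν :=
  ⟨inferInstance, measurePreserving_fst.map_eq, measurePreserving_snd.map_eq⟩

lemma map_prodMk_mem_couplings (μ : Measure X) [IsProbabilityMeasure μ] {T : X → X}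
    (hT : Measurable T) : μ.map (fun y => (y, T y)) ∈ couplings μ (μ.map T) := by
  have hgraph : Measurable fun y => (y, T y) := measurable_id.prodMk hT
  refine ⟨Measure.isProbabilityMeasure_map hgraph.aemeasurable, ?_, ?_⟩
  · rw [Measure.map_map measurable_fst hgraph]
    exact Measure.map_id
  · rw [Measure.map_map measurable_snd hgraph]
    rfl

variable [PseudoEMetricSpace X]

/-- The Wasserstein distance `W₁(μ, ν)` for the ground metric of `X`, with values in `ℝ≥0∞`. It
serves to transfer statements about a general ground space to `dW`, defined only for `ℓp` norms. -/
noncomputable def wassersteinDist (μ ν : Measure X) : ℝ≥0∞ :=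
  ⨅ K ∈ couplings μ ν, ∫⁻ z, edist z.1 z.2 ∂K

lemma wassersteinDist_map_le [OpensMeasurableSpace X] [SecondCountableTopology X]
    (μ : Measure X) [IsProbabilityMeasure μ] {T : X → X} (hT : Measurable T) :
    wassersteinDist μ (μ.map T) ≤ ∫⁻ y, edist y (T y) ∂μ := by
  refine (iInf₂_le _ (map_prodMk_mem_couplings μ hT)).trans_eq ?_
  exact lintegral_map measurable_edist (measurable_id.prodMk hT)

end Wasserstein

section KantorovichInequality

variable {X F : Type*} [MeasurableSpace X] [PseudoEMetricSpace X]
  [NormedAddCommGroup F] [NormedSpace ℝ F] {μ ν : Measure X} {f : X → F} {L : ℝ≥0}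

lemma edist_integral_le_of_mem_couplings {K : Measure (X × X)} (hK : K ∈ couplings μ ν)
    (hf : LipschitzWith L f) (hμ : Integrable f μ) (hν : Integrable f ν) :
    edist (∫ y, f y ∂μ) (∫ y, f y ∂ν) ≤ L * ∫⁻ z, edist z.1 z.2 ∂K := by
  obtain ⟨-, rfl, rfl⟩ := hK
  rw [integral_map measurable_fst.aemeasurable hμ.aestronglyMeasurable,
    integral_map measurable_snd.aemeasurable hν.aestronglyMeasurable]
  calc edist (∫ z, f z.1 ∂K) (∫ z, f z.2 ∂K)
      ≤ ∫⁻ z, edist (f z.1) (f z.2) ∂K :=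
        edist_integral_le_lintegral_edist (hμ.comp_measurable measurable_fst)
          (hν.comp_measurable measurable_snd)
    _ ≤ ∫⁻ z, L * edist z.1 z.2 ∂K := lintegral_mono fun z => hf z.1 z.2
    _ = L * ∫⁻ z, edist z.1 z.2 ∂K := lintegral_const_mul' _ _ ENNReal.coe_ne_top

variable [IsProbabilityMeasure μ] [IsProbabilityMeasure ν]

lemma edist_integral_le_mul_wassersteinDist (hf : LipschitzWith L f) (hμ : Integrable f μ)
    (hν : Integrable f ν) :
    edist (∫ y, f y ∂μ) (∫ y, f y ∂ν) ≤ L * wassersteinDist μ ν := by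
  have : Nonempty (couplings μ ν) := ⟨⟨_, prod_mem_couplings μ ν⟩⟩
  rw [wassersteinDist, iInf_subtype', ENNReal.mul_iInf fun h => absurd h ENNReal.coe_ne_top]
  exact le_iInf fun K => edist_integral_le_of_mem_couplings K.2 hf hμ hν

lemma dist_integral_le_of_wassersteinDist_le (hf : LipschitzWith L f) (hμ : Integrable f μ)
    (hν : Integrable f ν) {ε : ℝ} (hε : 0 ≤ ε)
    (hW : wassersteinDist μ ν ≤ ENNReal.ofReal ε) :
    dist (∫ y, f y ∂μ) (∫ y, f y ∂ν) ≤ L * ε := by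
  rw [← edist_le_ofReal (by positivity), ENNReal.ofReal_mul L.coe_nonneg,
    ENNReal.ofReal_coe_nnreal]
  exact (edist_integral_le_mul_wassersteinDist hf hμ hν).trans (by gcongr)

end KantorovichInequality

section NormedSpace

variable {E : Type*} [NormedAddCommGroup E] [MeasurableSpace E] [BorelSpace E]
  {P : Measure E} [IsProbabilityMeasure P]

lemma wassersteinDist_map_add_right_le [SecondCountableTopology E] (w : E) :
    wassersteinDist P (P.map (· + w)) ≤ ‖w‖ₑ := by
  refine (wassersteinDist_map_le P (measurable_add_const w)).trans_eq ?_
  simp [edist_eq_enorm_sub]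

lemma integrable_norm_map_add_right (hP : Integrable (fun y => ‖y‖) P) (w : E) :
    Integrable (fun y => ‖y‖) (P.map (· + w)) := by
  have hmeas : Measurable fun y : E => ‖y‖ := measurable_norm
  rw [integrable_map_measure hmeas.aestronglyMeasurable (measurable_add_const w).aemeasurable]
  exact (hP.add (integrable_const ‖w‖)).mono'
    (hmeas.comp (measurable_add_const w)).aestronglyMeasurable
    (.of_forall fun y => (norm_norm _).trans_le (norm_add_le y w))

variable [NormedSpace ℝ E]

lemma integrable_clm_of_integrable_norm {μ : Measure E} (hμ : Integrable (fun y => ‖y‖) μ)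
    (ℓ : E →L[ℝ] ℝ) : Integrable ℓ μ :=
  (hμ.const_mul ‖ℓ‖).mono' ℓ.measurable.aestronglyMeasurable (.of_forall ℓ.le_opNorm)

lemma integral_clm_map_add_right (hP : Integrable (fun y => ‖y‖) P) (ℓ : E →L[ℝ] ℝ) (w : E) :
    ∫ y, ℓ y ∂(P.map (· + w)) = ∫ y, ℓ y ∂P + ℓ w := by
  rw [integral_map (measurable_add_const w).aemeasurable ℓ.measurable.aestronglyMeasurable]
  simp only [map_add]
  rw [integral_add (integrable_clm_of_integrable_norm hP ℓ) (integrable_const _), integral_const,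
    probReal_univ, one_smul]

theorem isGreatest_integral_clm_wassersteinDist_le [SecondCountableTopology E]
    (hP : Integrable (fun y => ‖y‖) P) (ℓ : E →L[ℝ] ℝ) {v : E} (hv : ‖v‖ ≤ 1) (hℓv : ℓ v = ‖ℓ‖)
    {ε : ℝ} (hε : 0 ≤ ε) :
    IsGreatest {r : ℝ | ∃ μ : Measure E, IsProbabilityMeasure μ ∧ Integrable (fun y => ‖y‖) μ ∧
        wassersteinDist P μ ≤ ENNReal.ofReal ε ∧ r = ∫ y, ℓ y ∂μ}
      (∫ y, ℓ y ∂P + ε * ‖ℓ‖) := by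
  constructor
  · refine ⟨P.map (· + ε • v),
      Measure.isProbabilityMeasure_map (measurable_add_const _).aemeasurable,
      integrable_norm_map_add_right hP _, (wassersteinDist_map_add_right_le _).trans ?_, ?_⟩
    · rw [← ofReal_norm, norm_smul, Real.norm_of_nonneg hε]
      exact ENNReal.ofReal_le_ofReal (mul_le_of_le_one_right hε hv)
    · rw [integral_clm_map_add_right hP, map_smul, hℓv, smul_eq_mul]
  · rintro _ ⟨μ, hμ, hμint, hW, rfl⟩
    have hdist := dist_integral_le_of_wassersteinDist_le ℓ.lipschitz
      (integrable_clm_of_integrable_norm hP ℓ) (integrable_clm_of_integrable_norm hμint ℓ) hε hW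
    rw [dist_comm, Real.dist_eq, coe_nnnorm, mul_comm] at hdist
    linarith [le_of_abs_le hdist]

end NormedSpace

section LinftyNorm

variable {n : ℕ}

lemma lpNorm_top_eq_norm (y : Fin n → ℝ) : _root_.lpNorm ∞ y = ‖y‖ := by
  rw [_root_.lpNorm, if_pos rfl]
  have hnonneg : 0 ≤ ⨆ i, |y i| := Real.iSup_nonneg fun i => abs_nonneg (y i)
  refine le_antisymm (Real.iSup_le (norm_le_pi_norm y) (norm_nonneg y)) ?_
  exact (pi_norm_le_iff_of_nonneg hnonneg).2 (le_ciSup (Set.finite_range fun i => |y i|).bddAbove)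

lemma dW_top_eq_wassersteinDist (μ ν : Measure (Fin n → ℝ)) : dW ∞ μ ν = wassersteinDist μ ν := by
  simp only [dW, wassersteinDist, couplings, Set.mem_ofPred_eq, iInf_and, lpNorm_top_eq_norm,
    ofReal_norm, edist_eq_enorm_sub]

/-- The functional `y ↦ ⟨y, x⟩` as an element of the dual of `(ℝⁿ, ‖·‖_∞)`, the norm on
`Fin n → ℝ` being the sup norm. -/
def ipCLM (x : Fin n → ℝ) : (Fin n → ℝ) →L[ℝ] ℝ :=
  ∑ i, x i • ContinuousLinearMap.proj i

lemma ipCLM_apply (x y : Fin n → ℝ) : ipCLM x y = ip y x := by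
  simp [ipCLM, ip, mul_comm]

lemma norm_sign_le_one (x : Fin n → ℝ) : ‖fun i => (SignType.sign (x i) : ℝ)‖ ≤ 1 :=
  (pi_norm_le_iff_of_nonneg zero_le_one).2 fun i => by cases SignType.sign (x i) <;> simp

lemma ip_sign_left (x : Fin n → ℝ) : ip (fun i => (SignType.sign (x i) : ℝ)) x = ∑ i, |x i| := by
  simp only [ip, sign_mul_self]

lemma norm_ipCLM (x : Fin n → ℝ) : ‖ipCLM x‖ = ∑ i, |x i| := by
  refine le_antisymm ((ipCLM x).opNorm_le_bound (by positivity) fun y => ?_) ?_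
  · rw [ipCLM_apply, ip, Finset.sum_mul]
    refine norm_sum_le_of_le _ fun i _ => ?_
    rw [norm_mul, mul_comm, Real.norm_eq_abs (x i)]
    gcongr
    exact norm_le_pi_norm y i
  · rw [← ip_sign_left, ← ipCLM_apply]
    exact (le_abs_self _).trans ((ipCLM x).unit_le_opNorm _ (norm_sign_le_one x))

end LinftyNorm

section Empirical

variable {n N : ℕ} (c : Fin N → Fin n → ℝ)

instance isProbabilityMeasure_empirical [NeZero N] : IsProbabilityMeasure (empirical N c) := by
  constructor
  simp [empirical, ENNReal.inv_mul_cancel, NeZero.ne]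

variable {F : Type*} [NormedAddCommGroup F] (f : (Fin n → ℝ) → F)

lemma integrable_empirical_s15 [NeZero N] : Integrable f (empirical N c) :=
  (integrable_finsetSum_measure.2 fun _ _ => integrable_dirac enorm_lt_top).smul_measure
    (ENNReal.inv_ne_top.2 (NeZero.ne _))

lemma integral_empirical_s15 [NormedSpace ℝ F] [CompleteSpace F] :
    ∫ y, f y ∂(empirical N c) = (1 / (N : ℝ)) • ∑ k, f (c k) := by
  rw [empirical, integral_smul_measure,
    integral_finsetSum_measure fun _ _ => integrable_dirac enorm_lt_top]
  simp

end Empirical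

lemma mul_sum_ip_add_mul_sum {ι : Type*} [Fintype ι] {n : ℕ} (a ε : ℝ) (c : ι → Fin n → ℝ)
    (x : Fin n → ℝ) :
    a * ∑ k, ip (c k) x + ε * ∑ i, x i = ∑ i, (a * ∑ k, c k i + ε) * x i := by
  simp only [ip, add_mul, Finset.sum_add_distrib, Finset.mul_sum, Finset.sum_mul]
  rw [Finset.sum_comm]
  simp only [mul_assoc]

theorem stmt15_general {n : ℕ} (P : Measure (Fin n → ℝ)) [IsProbabilityMeasure P]
    (hP : Integrable (fun y => lpNorm ∞ y) P) (x : Fin n → ℝ) {ε : ℝ} (hε : 0 ≤ ε) :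
    IsGreatest {r : ℝ | ∃ μ : Measure (Fin n → ℝ), IsProbabilityMeasure μ ∧
        Integrable (fun y => lpNorm ∞ y) μ ∧
        dW ∞ P μ ≤ ENNReal.ofReal ε ∧ r = ∫ y, ip y x ∂μ}
      (∫ y, ip y x ∂P + ε * ∑ i, |x i|) := by
  have hsign : ipCLM x (fun i => (SignType.sign (x i) : ℝ)) = ‖ipCLM x‖ := by
    rw [ipCLM_apply, ip_sign_left, norm_ipCLM]
  simp only [lpNorm_top_eq_norm, dW_top_eq_wassersteinDist, ← ipCLM_apply, ← norm_ipCLM]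
    at hP ⊢
  exact isGreatest_integral_clm_wassersteinDist_le hP (ipCLM x) (norm_sign_le_one x) hsign hε

/-- Corollary 2, pointwise worst-case linear cost: for `x ≥ 0` and the
Wasserstein ball (ground metric `‖·‖_∞`) of radius `ε` around the empirical distribution of
the cost samples, `sup ∫ ⟨c,x⟩ dμ(c) = (1/N)Σₖ ⟨ĉᵏ,x⟩ + ε Σᵢ xᵢ = Σᵢ ((1/N)Σₖ ĉᵏᵢ + ε)xᵢ`. -/
theorem stmt15 (n : ℕ) (hn : 1 ≤ n)
    (x : Fin n → ℝ) (hx : ∀ i, 0 ≤ x i) (ε : ℝ) (hε : 0 ≤ ε)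
    (N : ℕ) (hN : 1 ≤ N) (c : Fin N → Fin n → ℝ) :
    sSup {r : ℝ | ∃ μ : Measure (Fin n → ℝ), IsProbabilityMeasure μ ∧
        Integrable (fun y => lpNorm ∞ y) μ ∧
        dW ∞ (empirical N c) μ ≤ ENNReal.ofReal ε ∧ r = ∫ y, ip y x ∂μ} =
      (1 / (N : ℝ)) * ∑ k, ip (c k) x + ε * ∑ i, x i ∧
    (1 / (N : ℝ)) * ∑ k, ip (c k) x + ε * ∑ i, x i =
      ∑ i, ((1 / (N : ℝ)) * ∑ k, c k i + ε) * x i := by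
  have : NeZero N := ⟨by omega⟩
  refine ⟨?_, mul_sum_ip_add_mul_sum _ ε c x⟩
  simpa only [integral_empirical_s15, smul_eq_mul, abs_of_nonneg (hx _)] using
    (stmt15_general (empirical N c) (integrable_empirical_s15 c _) x hε).csSup_eq
end
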